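/- For every integer d ≥ 2 there is a constant c_d such that the following holds. For every finite set P of m points in ℝ^d and every real r with 1 ≤ r ≤ m, there exists a nonzero polynomial f ∈ ℝ[x₁,…,x_d] of degree at most c_d·r^{1/d} such that each connected component of ℝ^d \ Z(f) contains at most m/r points of P; moreover, the number of connected components of ℝ^d \ Z(f) is at most c_d·r. -/

import Mathlib

/-!
By the polynomial ham sandwich theorem, `n` finite sets of points in `ℝ^d` can be bisected
simultaneously by a polynomial of degree `O(n^{1/d})`, since there are more than `n` monomials of
that degree. Bisecting the current cells again and again, and multiplying the bisecting
polynomials, one obtains after `j` rounds a product cutting `P` into `2^j` parts of at most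
`|P| / 2^j` points; its degree is a geometric sum, dominated by the last round.

The ham sandwich theorem rests on the Borsuk–Ulam theorem, which is proved algebraically. By
approximation it suffices to find real projective zeros of `n` forms of odd degrees in `n + 1`
variables, that is, to solve the systems `x i ^ D i + t * p i x = 0` with `D i` odd and
`deg (p i) ≤ D i` for arbitrarily large `t`. For all but countably many `t` the quotient of the
polynomial ring by this system has dimension `∏ i, D i` over `ℝ`; as this is odd, commuting
operators on it have a common eigenvector, which yields a real point.

The number of cells of `f` is bounded by a perturbation argument: each cell contains a local maximum
of `f ^ 2 - ε * ∑ i, x i ^ (2 * (k + 1))`, where `k = deg f`, for every small `ε > 0`. At such a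
point `x i ^ (2 * k + 1)` equals a polynomial of degree at most `2 * k` for every `i`, and such a
system has at most `(2 * k + 1) ^ d` solutions because its monomials with all exponents at most
`2 * k` span the functions on its solution set.
-/

attribute [local instance] Classical.propDecidable

noncomputable section

/-- The real zero set of a polynomial in `d` variables. -/
def zeroSet {d : ℕ} (f : MvPolynomial (Fin d) ℝ) : Set (Fin d → ℝ) :=
  {x | MvPolynomial.eval x f = 0}

open Asymptotics Filter Module MvPolynomial Topology

section BoxExponents

variable {σ : Type*} [Fintype σ] {n : σ → ℕ}

/-- The exponent vectors of the monomials divisible by no `X i ^ n i`, indexed by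
`(i : σ) → Fin (n i)` so that counting them is immediate. -/
def boxExponent (a : (i : σ) → Fin (n i)) : σ →₀ ℕ :=
  Finsupp.equivFunOnFinite.symm fun i => a i

theorem boxExponent_injective : Function.Injective (boxExponent (n := n)) :=
  Finsupp.equivFunOnFinite.symm.injective.comp fun _ _ h => funext fun i => Fin.ext (congrFun h i)

theorem boxExponent_mk {s : σ →₀ ℕ} (hs : ∀ i, s i < n i) :
    boxExponent (fun i => ⟨s i, hs i⟩) = s := by
  ext
  rfl

end BoxExponents

section RealCharacters

theorem exists_isRoot_of_odd_natDegree {p : Polynomial ℝ} (hp : Odd p.natDegree) :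
    ∃ x, p.IsRoot x := by
  wlog hlead : 0 ≤ p.leadingCoeff generalizing p
  · simpa using this (p := -p) (by simpa) (by simp; linarith)
  have htop : Tendsto p.eval atTop atTop :=
    p.tendsto_atTop_of_leadingCoeff_nonneg (Polynomial.natDegree_pos_iff_degree_pos.mp hp.pos) hlead
  have hbot : Tendsto (-(p.comp (-.X))).eval atTop atTop := by
    have hdeg : (-(p.comp (-.X))).natDegree = p.natDegree := by simp [Polynomial.natDegree_comp]
    refine Polynomial.tendsto_atTop_of_leadingCoeff_nonneg _ ?_ ?_
    · rw [← Polynomial.natDegree_pos_iff_degree_pos, hdeg]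
      exact hp.pos
    · simpa [Polynomial.leadingCoeff_comp, hp.neg_one_pow] using hlead
  obtain ⟨a, ha⟩ := (htop.eventually_ge_atTop 0).exists
  obtain ⟨b, hb⟩ := (hbot.eventually_ge_atTop 0).exists
  exact mem_range_of_exists_le_of_exists_ge p.continuous ⟨-b, by simpa using hb⟩ ⟨a, ha⟩

instance : IsRealClosed ℝ :=
  .of_linearOrderedField (fun hx => ⟨_, (Real.mul_self_sqrt hx).symm⟩)
    exists_isRoot_of_odd_natDegree

variable {K : Type*} [Field K] [IsRealClosed K] {A : Type*} [CommRing A] [Algebra K A]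

theorem exists_submodule_finrank_odd_lt {M : Type*} [AddCommGroup M] [Module K M] [Module A M]
    [IsScalarTower K A M] (hM : Odd (finrank K M)) {a : A} (ha : ∀ c : K, ∃ v : M, a • v ≠ c • v) :
    ∃ N : Submodule A M, Odd (finrank K N) ∧ finrank K N < finrank K M := by
  have : FiniteDimensional K M := .of_finrank_pos hM.pos
  have (N : Submodule A M) : FiniteDimensional K N :=
    inferInstanceAs (FiniteDimensional K (N.restrictScalars K))
  obtain ⟨c, hc⟩ := IsRealClosed.exists_isRoot_of_odd_natDegree
    (f := (Algebra.lsmul K K M a).charpoly) (by rwa [LinearMap.charpoly_natDegree])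
  obtain ⟨w, hw⟩ := ((End.hasEigenvalue_iff_isRoot_charpoly _ c).mpr hc).exists_hasEigenvector
  obtain ⟨u, hu⟩ := ha c
  let g : M →ₗ[A] M := LinearMap.lsmul A M (a - algebraMap K A c)
  have hg (v : M) : g v = a • v - c • v := by simp [g]
  have hsum : finrank K (LinearMap.range g) + finrank K (LinearMap.ker g) = finrank K M :=
    (g.restrictScalars K).finrank_range_add_finrank_ker
  have hker : 0 < finrank K (LinearMap.ker g) :=
    finrank_pos_iff_exists_ne_zero.mpr ⟨⟨w, by simpa [hg, sub_eq_zero] using hw.apply_eq_smul⟩,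
      by simpa using hw.2⟩
  have hrange : 0 < finrank K (LinearMap.range g) :=
    finrank_pos_iff_exists_ne_zero.mpr ⟨⟨g u, u, rfl⟩, by simpa [hg, sub_eq_zero] using hu⟩
  obtain hodd | heven := (finrank K (LinearMap.ker g)).even_or_odd.symm
  · exact ⟨_, hodd, by omega⟩
  · exact ⟨_, (Nat.odd_add.mp (hsum ▸ hM)).mpr heven, by omega⟩

theorem exists_common_eigenvector_of_odd_finrank {M : Type*} [AddCommGroup M] [Module K M]
    [Module A M] [IsScalarTower K A M] (hM : Odd (finrank K M)) :
    ∃ v : M, v ≠ 0 ∧ ∀ a : A, ∃ c : K, a • v = c • v := by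
  induction hn : finrank K M using Nat.strong_induction_on generalizing M with
  | _ n ih =>
    by_cases hscalar : ∀ a : A, ∃ c : K, ∀ v : M, a • v = c • v
    · have : FiniteDimensional K M := .of_finrank_pos hM.pos
      obtain ⟨v, hv⟩ := finrank_pos_iff_exists_ne_zero.mp hM.pos
      exact ⟨v, hv, fun a => (hscalar a).imp fun c hc => hc v⟩
    push Not at hscalar
    obtain ⟨a, ha⟩ := hscalar
    obtain ⟨N, hN, hlt⟩ := exists_submodule_finrank_odd_lt hM ha
    obtain ⟨v, hv, hev⟩ := ih _ (hn ▸ hlt) hN rfl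
    exact ⟨v, by simpa using hv, fun b => (hev b).imp fun c hc => congrArg Subtype.val hc⟩

theorem nonempty_algHom_of_odd_finrank (hA : Odd (finrank K A)) : Nonempty (A →ₐ[K] K) := by
  obtain ⟨v, hv, hev⟩ := exists_common_eigenvector_of_odd_finrank (A := A) hA
  choose χ hχ using hev
  have hcancel {c d : K} (h : c • v = d • v) : c = d := smul_left_injective K hv h
  exact ⟨{
    toFun := χ
    map_one' := hcancel (by rw [← hχ, one_smul, one_smul])
    map_mul' := fun a b => hcancel (by rw [← hχ, mul_smul, hχ b, mul_smul, smul_comm,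
      hχ a, smul_comm])
    map_zero' := hcancel (by rw [← hχ, zero_smul, zero_smul])
    map_add' := fun a b => hcancel (by rw [← hχ, add_smul, hχ a, hχ b, add_smul])
    commutes' := fun c => hcancel (by rw [← hχ, algebraMap_smul, Algebra.algebraMap_self_apply]) }⟩

end RealCharacters

section AdicExpansion

variable {σ R : Type*} [Fintype σ] [CommRing R]

/-- The monomial `∏ i, X i ^ ν i`, rewritten so that every full power `X i ^ D i` is replaced by
`G i`. -/
def adicMonomial (D : σ → ℕ) (G : σ → MvPolynomial σ R) (ν : σ →₀ ℕ) : MvPolynomial σ R :=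
  ∏ i, G i ^ (ν i / D i) * X i ^ (ν i % D i)

/-- The `R`-linear substitution of `G i` for `X i ^ D i`; it is bijective exactly when every
polynomial has a unique `G`-adic expansion with digits of degree `< D i` in each `X i`. -/
def adicExpansion (D : σ → ℕ) (G : σ → MvPolynomial σ R) :
    MvPolynomial σ R →ₗ[R] MvPolynomial σ R :=
  (basisMonomials σ R).constr R (adicMonomial D G)

/-- The matrix of `adicExpansion D G` on polynomials of degree at most `k`, in the basis of
monomials. -/
def adicMatrix (D : σ → ℕ) (G : σ → MvPolynomial σ R) (k : ℕ) :
    Matrix {ν : σ →₀ ℕ // ν.degree ≤ k} {ν : σ →₀ ℕ // ν.degree ≤ k} R :=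
  .of fun μ ν => coeff μ.1 (adicMonomial D G ν.1)

variable {D : σ → ℕ} {G : σ → MvPolynomial σ R}

theorem adicMonomial_add_single (ν : σ →₀ ℕ) {i : σ} (hi : 0 < D i) :
    adicMonomial D G (ν + .single i (D i)) = G i * adicMonomial D G ν := by
  have hfactor (j : σ) :
      G j ^ ((ν + .single i (D i)) j / D j) * X j ^ ((ν + .single i (D i)) j % D j) =
      (if j = i then G i else 1) * (G j ^ (ν j / D j) * X j ^ (ν j % D j)) := by
    obtain rfl | hij := eq_or_ne j i
    · simp [Nat.add_div_right _ hi, pow_succ', mul_assoc]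
    · simp [hij]
  simp only [adicMonomial, hfactor, Finset.prod_mul_distrib]
  simp

theorem adicMonomial_X_pow (ν : σ →₀ ℕ) :
    adicMonomial D (fun i => (X i ^ D i : MvPolynomial σ R)) ν = monomial ν 1 := by
  simp only [adicMonomial, ← pow_mul, ← pow_add, Nat.div_add_mod]
  simp [monomial_eq, Finsupp.prod_fintype]

theorem map_adicMonomial {S : Type*} [CommRing S] (φ : R →+* S) (ν : σ →₀ ℕ) :
    map φ (adicMonomial D G ν) = adicMonomial D (fun i => map φ (G i)) ν := by
  simp [adicMonomial]

theorem totalDegree_adicMonomial_le (hG : ∀ i, (G i).totalDegree ≤ D i) (ν : σ →₀ ℕ) :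
    (adicMonomial D G ν).totalDegree ≤ ν.degree := by
  rw [Finsupp.degree_eq_sum]
  refine (totalDegree_finsetProd _ _).trans (Finset.sum_le_sum fun i _ => ?_)
  calc (G i ^ (ν i / D i) * X i ^ (ν i % D i)).totalDegree
      ≤ ν i / D i * (G i).totalDegree + ν i % D i := by
        refine (totalDegree_mul _ _).trans (add_le_add (totalDegree_pow _ _) ?_)
        rw [X_pow_eq_monomial]
        simpa using totalDegree_monomial_le (.single i (ν i % D i)) (1 : R)
    _ ≤ ν i / D i * D i + ν i % D i := by gcongr; exact hG i
    _ = ν i := Nat.div_add_mod' _ _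

theorem adicExpansion_monomial (ν : σ →₀ ℕ) (c : R) :
    adicExpansion D G (monomial ν c) = c • adicMonomial D G ν := by
  simp [adicExpansion, Basis.constr_apply, basisMonomials]

theorem adicExpansion_X_pow_mul {i : σ} (hi : 0 < D i) (q : MvPolynomial σ R) :
    adicExpansion D G (X i ^ D i * q) = G i * adicExpansion D G q := by
  induction q using MvPolynomial.induction_on' with
  | monomial ν c =>
    rw [X_pow_eq_monomial, monomial_mul, one_mul, add_comm, adicExpansion_monomial,
      adicMonomial_add_single ν hi, adicExpansion_monomial, mul_smul_comm]
  | add p q hp hq => rw [mul_add, map_add, hp, hq, map_add, mul_add]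

instance (k : ℕ) : Fintype {ν : σ →₀ ℕ // ν.degree ≤ k} := (Finsupp.finite_of_degree_le k).fintype

theorem adicMatrix_mulVec_coeff {k : ℕ} {q : MvPolynomial σ R} (hq : q.totalDegree ≤ k) :
    (adicMatrix D G k).mulVec (fun ν => coeff ν.1 q) =
      fun μ => coeff μ.1 (adicExpansion D G q) := by
  have hsum : q = ∑ ν : {ν : σ →₀ ℕ // ν.degree ≤ k}, monomial ν.1 (coeff ν.1 q) := by
    ext m
    by_cases hm : m.degree ≤ k
    · rw [coeff_sum, Finset.sum_eq_single_of_mem ⟨m, hm⟩ (Finset.mem_univ _)]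
      · simp
      · rintro ν - hν
        rw [coeff_monomial, if_neg fun h => hν (Subtype.ext h)]
    · have hzero : coeff m q = 0 := coeff_eq_zero_of_totalDegree_lt (by
        rw [← Finsupp.degree_apply]; omega)
      rw [hzero, coeff_sum, Finset.sum_eq_zero fun ν _ => ?_]
      rw [coeff_monomial, if_neg fun h => hm (by rw [← h]; exact ν.2)]
  ext μ
  conv_rhs => rw [hsum]
  simp [adicMatrix, Matrix.mulVec, dotProduct, adicExpansion_monomial, coeff_sum, mul_comm]

theorem adicExpansion_injective [IsDomain R] (hdet : ∀ k, (adicMatrix D G k).det ≠ 0) :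
    Function.Injective (adicExpansion D G) := by
  refine (injective_iff_map_eq_zero _).mpr fun q hq => ?_
  have hcoeff := Matrix.eq_zero_of_mulVec_eq_zero (hdet q.totalDegree) <| by
    rw [adicMatrix_mulVec_coeff le_rfl, hq]
    rfl
  ext ν
  by_contra hν
  exact hν (congrFun hcoeff ⟨ν, le_totalDegree (mem_support_iff.mpr hν)⟩)

theorem totalDegree_adicExpansion_le (hG : ∀ i, (G i).totalDegree ≤ D i) (q : MvPolynomial σ R) :
    (adicExpansion D G q).totalDegree ≤ q.totalDegree := by
  conv_lhs => rw [q.as_sum, map_sum]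
  refine totalDegree_finsetSum_le fun ν hν => ?_
  rw [adicExpansion_monomial]
  exact (totalDegree_smul_le _ _).trans
    ((totalDegree_adicMonomial_le hG ν).trans (le_totalDegree hν))

variable {K : Type*} [Field K] {G : σ → MvPolynomial σ K}

theorem adicExpansion_surjective (hG : ∀ i, (G i).totalDegree ≤ D i)
    (hinj : Function.Injective (adicExpansion D G)) : Function.Surjective (adicExpansion D G) := by
  intro p
  have hmaps : ∀ q ∈ restrictTotalDegree σ K p.totalDegree,
      adicExpansion D G q ∈ restrictTotalDegree σ K p.totalDegree := fun q hq => by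
    rw [mem_restrictTotalDegree] at hq ⊢
    exact (totalDegree_adicExpansion_le hG q).trans hq
  obtain ⟨q, hq⟩ := LinearMap.surjective_of_injective
    (f := (adicExpansion D G).restrict hmaps)
    (fun a b hab => Subtype.ext (hinj (congrArg Subtype.val hab)))
    ⟨p, (mem_restrictTotalDegree ..).mpr le_rfl⟩
  exact ⟨q, congrArg Subtype.val hq⟩

theorem adicExpansion_mem_span_range_iff (hD : ∀ i, 0 < D i)
    (hbij : Function.Bijective (adicExpansion D G)) (p : MvPolynomial σ K) :
    adicExpansion D G p ∈ Ideal.span (Set.range G) ↔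
      p ∈ Ideal.span (Set.range fun i => (X i ^ D i : MvPolynomial σ K)) := by
  have hsum (c : σ → MvPolynomial σ K) :
      adicExpansion D G (∑ i, c i * X i ^ D i) = ∑ i, adicExpansion D G (c i) * G i := by
    simp only [map_sum, mul_comm (c _), adicExpansion_X_pow_mul (hD _), mul_comm (G _)]
  simp only [Ideal.mem_span_range_iff_exists_fun]
  constructor
  · rintro ⟨c, hc⟩
    choose e he using fun i => hbij.surjective (c i)
    exact ⟨e, hbij.injective (by simp only [hsum, he, hc])⟩
  · rintro ⟨e, rfl⟩
    exact ⟨_, (hsum e).symm⟩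

/-- The coefficients of a polynomial at the monomials divisible by no `X i ^ D i`. -/
def boxCoeff (K : Type*) [Field K] (D : σ → ℕ) :
    MvPolynomial σ K →ₗ[K] (((i : σ) → Fin (D i)) → K) :=
  LinearMap.pi fun a => lcoeff K (boxExponent a)

theorem boxCoeff_apply (p : MvPolynomial σ K) (a : (i : σ) → Fin (D i)) :
    boxCoeff K D p a = coeff (boxExponent a) p :=
  rfl

theorem boxCoeff_eq_zero_iff (p : MvPolynomial σ K) :
    boxCoeff K D p = 0 ↔ p ∈ Ideal.span (Set.range fun i => (X i ^ D i : MvPolynomial σ K)) := by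
  simp only [X_pow_eq_monomial]
  rw [Set.range_comp' (fun s => monomial s (1 : K)), mem_ideal_span_monomial_image]
  simp only [Set.exists_range_iff, Finsupp.single_le_iff]
  constructor
  · intro hp s hs
    by_contra! hlt
    have := congrFun hp fun i => ⟨s i, hlt i⟩
    rw [boxCoeff_apply, boxExponent_mk] at this
    exact MvPolynomial.mem_support_iff.mp hs this
  · intro hp
    ext a
    by_contra ha
    obtain ⟨i, hi⟩ := hp _ (MvPolynomial.mem_support_iff.mpr ha)
    exact (a i).is_lt.not_ge hi

theorem boxCoeff_surjective (K : Type*) [Field K] (D : σ → ℕ) :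
    Function.Surjective (boxCoeff K D) := fun c =>
  ⟨∑ a, monomial (boxExponent a) (c a), by
    ext a
    simp [boxCoeff_apply, coeff_sum, coeff_monomial, boxExponent_injective.eq_iff]⟩

theorem finrank_quotient_span_range (hD : ∀ i, 0 < D i) (hG : ∀ i, (G i).totalDegree ≤ D i)
    (hinj : Function.Injective (adicExpansion D G)) :
    finrank K (MvPolynomial σ K ⧸ Ideal.span (Set.range G)) = ∏ i, D i := by
  have hbij : Function.Bijective (adicExpansion D G) := ⟨hinj, adicExpansion_surjective hG hinj⟩
  let π := (Ideal.Quotient.mkₐ K (Ideal.span (Set.range G))).toLinearMap ∘ₗ adicExpansion D G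
  have hπ : Function.Surjective π := Ideal.Quotient.mk_surjective.comp hbij.surjective
  have hker : LinearMap.ker π = LinearMap.ker (boxCoeff K D) := by
    ext p
    simp only [π, LinearMap.mem_ker, boxCoeff_eq_zero_iff]
    exact Ideal.Quotient.eq_zero_iff_mem.trans (adicExpansion_mem_span_range_iff hD hbij p)
  calc finrank K (MvPolynomial σ K ⧸ Ideal.span (Set.range G))
      = finrank K (MvPolynomial σ K ⧸ LinearMap.ker π) :=
        (π.quotKerEquivOfSurjective hπ).finrank_eq.symm
    _ = finrank K (((i : σ) → Fin (D i)) → K) := by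
      rw [hker]
      exact ((boxCoeff K D).quotKerEquivOfSurjective (boxCoeff_surjective K D)).finrank_eq
    _ = ∏ i, D i := by simp

end AdicExpansion

section OddSystem

variable {σ : Type*} [Fintype σ]

theorem det_adicMatrix_map {R S : Type*} [CommRing R] [CommRing S] (φ : R →+* S) (D : σ → ℕ)
    (G : σ → MvPolynomial σ R) (k : ℕ) :
    (adicMatrix D (fun i => map φ (G i)) k).det = φ (adicMatrix D G k).det := by
  rw [RingHom.map_det]
  congr 1
  ext μ ν
  simp [adicMatrix, ← map_adicMonomial, coeff_map]

theorem adicMatrix_X_pow {R : Type*} [CommRing R] (D : σ → ℕ) (k : ℕ) :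
    adicMatrix D (fun i => (X i ^ D i : MvPolynomial σ R)) k = 1 := by
  ext μ ν
  simp only [adicMatrix, Matrix.of_apply, adicMonomial_X_pow, coeff_monomial, Matrix.one_apply,
    Subtype.ext_iff, eq_comm]

theorem countable_setOf_det_adicMatrix_eq_zero {K : Type*} [CommRing K] [IsDomain K] (D : σ → ℕ)
    (p : σ → MvPolynomial σ K) :
    {t : K | ∃ k, (adicMatrix D (fun i => X i ^ D i + C t * p i) k).det = 0}.Countable := by
  rw [Set.ofPred_exists]
  refine Set.countable_iUnion fun k => Set.Finite.countable ?_
  let G (i : σ) : MvPolynomial σ (Polynomial K) := X i ^ D i + C .X * map Polynomial.C (p i)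
  have hG (t : K) (i : σ) : map (Polynomial.evalRingHom t) (G i) = X i ^ D i + C t * p i := by
    have hid : (Polynomial.evalRingHom t).comp Polynomial.C = RingHom.id K := by ext; simp
    simp [G, MvPolynomial.map_map, hid, MvPolynomial.map_id]
  have heval (t : K) : (adicMatrix D G k).det.eval t =
      (adicMatrix D (fun i => X i ^ D i + C t * p i) k).det := by
    simp only [← hG, det_adicMatrix_map, Polynomial.coe_evalRingHom]
  have hdet : (adicMatrix D G k).det ≠ 0 := fun h => by
    simpa [h, adicMatrix_X_pow] using heval 0
  simpa only [← heval, Polynomial.IsRoot] using Polynomial.finite_setOfPred_isRoot hdet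

end OddSystem

theorem exists_pow_add_mul_eval_eq_zero {σ : Type*} [Finite σ] {D : σ → ℕ} (hD : ∀ i, Odd (D i))
    {p : σ → MvPolynomial σ ℝ} (hp : ∀ i, (p i).totalDegree ≤ D i) (A : ℝ) :
    ∃ t > A, ∃ x : σ → ℝ, ∀ i, x i ^ D i + t * eval x (p i) = 0 := by
  cases nonempty_fintype σ
  obtain ⟨t, ht, htA⟩ :=
    ((countable_setOf_det_adicMatrix_eq_zero D p).dense_compl ℝ).exists_gt A
  set G : σ → MvPolynomial σ ℝ := fun i => X i ^ D i + C t * p i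
  have hG (i : σ) : (G i).totalDegree ≤ D i := by
    refine (totalDegree_add _ _).trans (max_le (totalDegree_X_pow i _).le ?_)
    rw [← smul_eq_C_mul]
    exact (totalDegree_smul_le _ _).trans (hp i)
  have hinj : Function.Injective (adicExpansion D G) :=
    adicExpansion_injective (by simpa using ht)
  have hodd : Odd (finrank ℝ (MvPolynomial σ ℝ ⧸ Ideal.span (Set.range G))) := by
    rw [finrank_quotient_span_range (fun i => (hD i).pos) hG hinj]
    exact Finset.prod_induction _ Odd (fun _ _ => Odd.mul) odd_one fun i _ => hD i
  obtain ⟨χ⟩ := nonempty_algHom_of_odd_finrank hodd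
  let φ : MvPolynomial σ ℝ →ₐ[ℝ] ℝ := χ.comp (Ideal.Quotient.mkₐ ℝ _)
  refine ⟨t, htA, fun i => φ (X i), fun i => ?_⟩
  have hG0 : φ (G i) = 0 := by
    have hmem : G i ∈ Ideal.span (Set.range G) := Ideal.subset_span ⟨i, rfl⟩
    rw [AlgHom.comp_apply, Ideal.Quotient.mkₐ_eq_mk, Ideal.Quotient.eq_zero_iff_mem.mpr hmem,
      map_zero]
  rw [aeval_unique φ] at hG0
  simpa [G, aeval_eq_eval, Function.comp_def] using hG0

section Homogeneous

variable {σ τ R : Type*} [CommSemiring R]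

theorem totalDegree_aeval_le (q : σ → MvPolynomial τ R) {k : ℕ}
    (hq : ∀ i, (q i).totalDegree ≤ k) (p : MvPolynomial σ R) :
    (aeval q p).totalDegree ≤ p.totalDegree * k := by
  rw [aeval_def, eval₂_eq]
  refine totalDegree_finsetSum_le fun m hm => ?_
  calc (C (coeff m p) * ∏ i ∈ m.support, q i ^ m i).totalDegree
      ≤ ∑ i ∈ m.support, (q i ^ m i).totalDegree := by
        refine (totalDegree_mul _ _).trans ?_
        rw [totalDegree_C, zero_add]
        exact totalDegree_finsetProd _ _
    _ ≤ ∑ i ∈ m.support, m i * k :=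
        Finset.sum_le_sum fun i _ => (totalDegree_pow _ _).trans (Nat.mul_le_mul_left _ (hq i))
    _ = m.degree * k := by rw [← Finset.sum_mul, Finsupp.degree_apply]
    _ ≤ p.totalDegree * k := Nat.mul_le_mul_right _ (le_totalDegree hm)

theorem eval_smul_of_isHomogeneous {p : MvPolynomial σ R} {n : ℕ} (hp : p.IsHomogeneous n) (c : R)
    (x : σ → R) : eval (c • x) p = c ^ n * eval x p := by
  simp only [eval_eq, Finset.mul_sum]
  refine Finset.sum_congr rfl fun m hm => ?_
  have hdeg : ∑ i ∈ m.support, m i = n := by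
    rw [← Finsupp.degree_apply, Finsupp.degree_eq_weight_one]
    exact hp (MvPolynomial.mem_support_iff.mp hm)
  simp only [Pi.smul_apply, smul_eq_mul, mul_pow, Finset.prod_mul_distrib,
    Finset.prod_pow_eq_pow_sum, hdeg, mul_left_comm]

end Homogeneous

theorem exists_isHomogeneous_eval_eq_odd_part {σ : Type*} [Fintype σ] (P : MvPolynomial σ ℝ) :
    ∃ D, Odd D ∧ ∃ H : MvPolynomial σ ℝ, H.IsHomogeneous D ∧
      ∀ y : σ → ℝ, ∑ i, y i ^ 2 = 1 → eval y H = (eval y P - eval (-y) P) / 2 := by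
  set D := 2 * P.totalDegree + 1 with hD
  set Q : MvPolynomial σ ℝ := ∑ i, X i ^ 2 with hQ
  have hQhom : Q.IsHomogeneous 2 := IsHomogeneous.sum _ _ _ fun i _ => isHomogeneous_X_pow i 2
  refine ⟨D, by simp [hD], ∑ n ∈ Finset.range (P.totalDegree + 1) with Odd n,
    homogeneousComponent n P * Q ^ ((D - n) / 2), ?_, fun y hy => ?_⟩
  · refine IsHomogeneous.sum _ _ _ fun n hn => ?_
    obtain ⟨hlt, k, rfl⟩ := Finset.mem_filter.mp hn
    rw [Finset.mem_range] at hlt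
    have hdeg : D = 2 * k + 1 + 2 * ((D - (2 * k + 1)) / 2) := by omega
    nth_rw 2 [hdeg]
    exact (homogeneousComponent_isHomogeneous _ P).mul (hQhom.pow _)
  · have hneg (n : ℕ) : eval (-y) (homogeneousComponent n P) =
        (-1) ^ n * eval y (homogeneousComponent n P) := by
      rw [← eval_smul_of_isHomogeneous (homogeneousComponent_isHomogeneous n P), neg_one_smul]
    have hQy : eval y Q = 1 := by simpa [hQ] using hy
    have hsum (z : σ → ℝ) : eval z P =
        ∑ n ∈ Finset.range (P.totalDegree + 1), eval z (homogeneousComponent n P) := by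
      rw [← map_sum, sum_homogeneousComponent]
    rw [hsum y, hsum (-y), ← Finset.sum_sub_distrib, Finset.sum_div, map_sum, Finset.sum_filter]
    refine Finset.sum_congr rfl fun n _ => ?_
    simp only [map_mul, map_pow, hQy, one_pow, mul_one, hneg]
    split_ifs with hn
    · rw [hn.neg_one_pow]; ring
    · rw [(Nat.not_odd_iff_even.mp hn).neg_one_pow]; ring

theorem exists_eval_near_of_continuousOn {σ : Type*} {K : Set (σ → ℝ)} (hK : IsCompact K)
    {f : (σ → ℝ) → ℝ} (hf : ContinuousOn f K) {ε : ℝ} (hε : 0 < ε) :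
    ∃ p : MvPolynomial σ ℝ, ∀ x ∈ K, ‖eval x p - f x‖ < ε := by
  have := isCompact_iff_compactSpace.mp hK
  let coord (i : σ) : C(K, ℝ) := ⟨fun x => x.1 i, (continuous_apply i).comp continuous_subtype_val⟩
  have hsep : (aeval (R := ℝ) coord).range.SeparatesPoints := by
    intro x y hxy
    obtain ⟨i, hi⟩ := Function.ne_iff.mp (Subtype.coe_injective.ne hxy)
    exact ⟨coord i, ⟨coord i, ⟨X i, aeval_X coord i⟩, rfl⟩, hi⟩
  obtain ⟨⟨_, p, rfl⟩, hp⟩ :=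
    ContinuousMap.exists_mem_subalgebra_near_continuous_of_separatesPoints _ hsep _
      (continuousOn_iff_continuous_domRestrict.mp hf) ε hε
  refine ⟨p, fun x hx => ?_⟩
  have heval : aeval coord p ⟨x, hx⟩ = eval x p := by
    have h := comp_aeval_apply (φ := ContinuousMap.evalAlgHom ℝ ℝ (⟨x, hx⟩ : K)) coord p
    simpa [coord, aeval_eq_eval] using h
  simpa [← heval] using hp ⟨x, hx⟩

theorem exists_eq_zero_of_forall_norm_le {X E : Type*} [TopologicalSpace X] [NormedAddCommGroup E]
    {K : Set X} (hK : IsCompact K) {g : X → E} (hg : ContinuousOn g K)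
    (h : ∀ ε > 0, ∃ x ∈ K, ‖g x‖ ≤ ε) : ∃ x ∈ K, g x = 0 := by
  obtain ⟨x₁, hx₁, -⟩ := h 1 one_pos
  obtain ⟨x, hx, hmin⟩ := hK.exists_isMinOn ⟨x₁, hx₁⟩ hg.norm
  refine ⟨x, hx, norm_le_zero_iff.mp (le_of_forall_pos_le_add fun ε hε => ?_)⟩
  obtain ⟨y, hy, hyε⟩ := h ε hε
  simpa using (hmin hy).trans hyε

theorem exists_ne_zero_forall_eval_eq_zero_of_odd {ι : Type*} [Finite ι]
    {H : ι → MvPolynomial (Option ι) ℝ} {D : ι → ℕ} (hH : ∀ i, (H i).IsHomogeneous (D i))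
    (hD : ∀ i, Odd (D i)) : ∃ y ≠ 0, ∀ i, eval y (H i) = 0 := by
  cases nonempty_fintype ι
  let p (i : ι) : MvPolynomial ι ℝ := aeval (fun o => o.elim 1 X) (H i)
  have hp (i : ι) : (p i).totalDegree ≤ D i := by
    refine (totalDegree_aeval_le _ (k := 1) ?_ (H i)).trans ?_
    · rintro (_ | j) <;> simp
    · simpa using (hH i).totalDegree_le
  have hpeval (x : ι → ℝ) (i : ι) : eval x (p i) = eval (fun o => o.elim 1 x) (H i) := by
    rw [← aeval_eq_eval, ← aeval_eq_eval, comp_aeval_apply]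
    congr 2 with (_ | j) <;> simp
  suffices h : ∃ z ∈ Metric.sphere (0 : Option ι → ℝ) 1, (fun i => eval z (H i)) = 0 by
    obtain ⟨z, hz, hzero⟩ := h
    exact ⟨z, ne_zero_of_mem_unit_sphere ⟨z, hz⟩, congrFun hzero⟩
  refine exists_eq_zero_of_forall_norm_le (isCompact_sphere 0 1)
    (continuous_pi fun i => (H i).continuous_eval).continuousOn fun ε hε => ?_
  obtain ⟨t, ht, x, hx⟩ := exists_pow_add_mul_eval_eq_zero hD hp ε⁻¹
  have ht0 : 0 < t := (inv_pos.mpr hε).trans ht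
  set y : Option ι → ℝ := fun o => o.elim 1 x
  have hynorm : 0 < ‖y‖ := norm_pos_iff.mpr fun h => one_ne_zero (congrFun h none)
  refine ⟨‖y‖⁻¹ • y, by simp [norm_smul, hynorm.ne'],
    (pi_norm_le_iff_of_nonneg hε.le).mpr fun i => ?_⟩
  have hxy : |x i| ≤ ‖y‖ := norm_le_pi_norm y (some i)
  have heval : t * eval y (H i) = -x i ^ D i := by
    rw [← hpeval x i]
    linarith [hx i]
  calc ‖eval (‖y‖⁻¹ • y) (H i)‖ = t⁻¹ * (|x i| / ‖y‖) ^ D i := by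
        rw [eval_smul_of_isHomogeneous (hH i), ← inv_mul_cancel_left₀ ht0.ne' (eval y (H i)), heval]
        simp only [norm_mul, norm_neg, norm_pow, norm_inv, Real.norm_eq_abs, abs_norm,
          abs_of_pos ht0]
        ring
    _ ≤ t⁻¹ * 1 := by gcongr; exact pow_le_one₀ (by positivity) (div_le_one_of_le₀ hxy hynorm.le)
    _ ≤ ε := by rw [mul_one]; exact (inv_lt_of_inv_lt₀ hε ht).le

theorem exists_smul_sum_sq_eq_one {σ : Type*} [Fintype σ] {y : σ → ℝ} (hy : y ≠ 0) :
    ∃ c : ℝ, ∑ i, (c • y) i ^ 2 = 1 := by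
  have hpos : ∑ i, y i ^ 2 ≠ 0 := fun h => hy <| funext fun i => by
    simpa using (Finset.sum_eq_zero_iff_of_nonneg fun i _ => sq_nonneg (y i)).mp h i
  refine ⟨(√(∑ i, y i ^ 2))⁻¹, ?_⟩
  simp only [Pi.smul_apply, smul_eq_mul, mul_pow, ← Finset.mul_sum, inv_pow,
    Real.sq_sqrt (Finset.sum_nonneg fun i _ => sq_nonneg (y i))]
  exact inv_mul_cancel₀ hpos

theorem isCompact_setOf_sum_sq_eq_one {σ : Type*} [Fintype σ] :
    IsCompact {y : σ → ℝ | ∑ i, y i ^ 2 = 1} := by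
  refine (isCompact_closedBall (0 : σ → ℝ) 1).of_isClosed_subset
    (isClosed_eq (by fun_prop) continuous_const) fun y hy => ?_
  rw [mem_closedBall_zero_iff, pi_norm_le_iff_of_nonneg zero_le_one]
  refine fun i => (sq_le_one_iff_abs_le_one _).mp ?_
  rw [← Set.mem_ofPred.mp hy]
  exact Finset.single_le_sum (fun j _ => sq_nonneg (y j)) (Finset.mem_univ i)

theorem exists_eq_zero_of_odd_of_sum_sq_eq_one {ι : Type*} [Fintype ι]
    {F : (Option ι → ℝ) → ι → ℝ} (hF : ContinuousOn F {y | ∑ i, y i ^ 2 = 1})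
    (hodd : ∀ y, ∑ i, y i ^ 2 = 1 → F (-y) = -F y) : ∃ y, ∑ i, y i ^ 2 = 1 ∧ F y = 0 := by
  refine exists_eq_zero_of_forall_norm_le isCompact_setOf_sum_sq_eq_one hF fun ε hε => ?_
  choose P hP using fun i => exists_eval_near_of_continuousOn isCompact_setOf_sum_sq_eq_one
    (continuousOn_pi.mp hF i) hε
  choose D hD H hH hHP using fun i => exists_isHomogeneous_eval_eq_odd_part (P i)
  obtain ⟨y, hy0, hy⟩ := exists_ne_zero_forall_eval_eq_zero_of_odd hH hD
  obtain ⟨c, hc⟩ := exists_smul_sum_sq_eq_one hy0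
  have hneg : ∑ i, (-(c • y)) i ^ 2 = 1 := by simpa using hc
  refine ⟨c • y, hc, (pi_norm_le_iff_of_nonneg hε.le).mpr fun i => ?_⟩
  have hPodd : eval (c • y) (P i) = eval (-(c • y)) (P i) := by
    have h := hHP i (c • y) hc
    rw [eval_smul_of_isHomogeneous (hH i), hy i, mul_zero] at h
    linarith
  have hplus := abs_lt.mp (hP i _ hc)
  have hminus := abs_lt.mp (hP i _ hneg)
  rw [hodd _ hc, Pi.neg_apply, ← hPodd] at hminus
  exact abs_le.mpr ⟨by linarith, by linarith⟩

theorem borsuk_ulam {E F : Type*} [NormedAddCommGroup E] [NormedSpace ℝ E] [FiniteDimensional ℝ E]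
    [NormedAddCommGroup F] [NormedSpace ℝ F] [FiniteDimensional ℝ F]
    (hdim : finrank ℝ F < finrank ℝ E) {f : E → F} (hf : ContinuousOn f (Metric.sphere 0 1))
    (hodd : ∀ x ∈ Metric.sphere (0 : E) 1, f (-x) = -f x) :
    ∃ x ∈ Metric.sphere (0 : E) 1, f x = 0 := by
  let e := (finBasis ℝ F).equivFunL
  obtain ⟨L, hL⟩ := (finrank_le_iff_exists_linearMap
    (R := ℝ) (M := Option (Fin (finrank ℝ F)) → ℝ) (M' := E)).mp (by simpa using hdim)
  have hLc : Continuous L := L.continuous_of_finiteDimensional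
  have hLne (y) (hy : ∑ i, y i ^ 2 = 1) : ‖L y‖ ≠ 0 := by
    rw [norm_ne_zero_iff, (map_ne_zero_iff L hL)]
    rintro rfl
    simp at hy
  have hsphere (y) (hy : ∑ i, y i ^ 2 = 1) : ‖L y‖⁻¹ • L y ∈ Metric.sphere (0 : E) 1 := by
    simp [norm_smul, hLne y hy]
  obtain ⟨y, hy, hzero⟩ := exists_eq_zero_of_odd_of_sum_sq_eq_one
    (F := fun y => e (f (‖L y‖⁻¹ • L y)))
    (e.continuous.comp_continuousOn (hf.comp
      ((hLc.norm.continuousOn.inv₀ hLne).smul hLc.continuousOn) hsphere))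
    (fun y hy => by
      rw [map_neg, norm_neg, smul_neg, hodd _ (hsphere y hy), map_neg])
  exact ⟨_, hsphere y hy, e.map_eq_zero_iff.mp hzero⟩

section HamSandwich

/-- The function `g` bisects the finite set `S`, in the sense of the discrete ham sandwich theorem:
each of the open sides `{g > 0}` and `{g < 0}` contains at most half of `S`, while any number of
points may lie on `{g = 0}`. -/
def Bisects {α : Type*} (g : α → ℝ) (S : Finset α) : Prop :=
  2 * {p ∈ S | 0 < g p}.card ≤ S.card ∧ 2 * {p ∈ S | g p < 0}.card ≤ S.card

/-- The truncation of a real number to `[-1, 1]`; it makes `truncate (k * x)` an odd continuous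
approximation of the sign of `x` for large `k`. -/
def truncate (x : ℝ) : ℝ := x / max 1 |x|

theorem truncate_neg (x : ℝ) : truncate (-x) = -truncate x := by
  simp [truncate, neg_div]

theorem truncate_of_one_le {x : ℝ} (hx : 1 ≤ x) : truncate x = 1 := by
  have hx0 : 0 < x := one_pos.trans_le hx
  rw [truncate, abs_of_pos hx0, max_eq_right hx, div_self hx0.ne']

theorem neg_one_le_truncate (x : ℝ) : -1 ≤ truncate x := by
  rw [truncate, le_div_iff₀ (by positivity), neg_one_mul]
  exact (neg_le_neg (le_max_right 1 |x|)).trans (neg_abs_le x)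

theorem continuous_truncate : Continuous truncate :=
  continuous_id.div (by fun_prop) fun x => (one_pos.trans_le (le_max_left 1 |x|)).ne'

variable {α : Type*}

theorem two_mul_card_filter_le_card_of_sum_eq_zero {S : Finset α} {c : α → ℝ} {q : α → Prop}
    (hc : ∀ p ∈ S, -1 ≤ c p) (hq : ∀ p ∈ S, q p → c p = 1) (hsum : ∑ p ∈ S, c p = 0) :
    2 * {p ∈ S | q p}.card ≤ S.card := by
  have hle : ∑ p ∈ S, (2 * (if q p then 1 else 0) - 1) ≤ ∑ p ∈ S, c p := by
    refine Finset.sum_le_sum fun p hp => ?_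
    split_ifs with h
    · linarith [hq p hp h]
    · linarith [hc p hp]
  rw [hsum, Finset.sum_sub_distrib, ← Finset.mul_sum, Finset.sum_boole, Finset.sum_const,
    nsmul_one, sub_nonpos] at hle
  exact_mod_cast hle

theorem two_mul_card_filter_pos_le_of_tendsto {β : Type*} {l : Filter β} [l.NeBot] {S : Finset α}
    {k : β → ℝ} {u : β → α → ℝ} {a : α → ℝ} (hk : Tendsto k l atTop)
    (hu : ∀ p, Tendsto (u · p) l (𝓝 (a p)))
    (hsum : ∀ m, ∑ p ∈ S, truncate (k m * u m p) = 0) :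
    2 * {p ∈ S | 0 < a p}.card ≤ S.card := by
  have hev : ∀ᶠ m in l, ∀ p ∈ S, 0 < a p → truncate (k m * u m p) = 1 := by
    refine (eventually_all_finset S).mpr fun p _ => eventually_imp_distrib_left.mpr fun hp => ?_
    filter_upwards [(hk.atTop_mul_pos hp (hu p)).eventually_ge_atTop 1] with m hm
      using truncate_of_one_le hm
  obtain ⟨m, hm⟩ := hev.exists
  exact two_mul_card_filter_le_card_of_sum_eq_zero (fun p _ => neg_one_le_truncate _) hm (hsum m)

theorem bisects_of_tendsto {β : Type*} {l : Filter β} [l.NeBot] {S : Finset α}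
    {k : β → ℝ} {u : β → α → ℝ} {a : α → ℝ} (hk : Tendsto k l atTop)
    (hu : ∀ p, Tendsto (u · p) l (𝓝 (a p)))
    (hsum : ∀ m, ∑ p ∈ S, truncate (k m * u m p) = 0) : Bisects a S := by
  refine ⟨two_mul_card_filter_pos_le_of_tendsto hk hu hsum, ?_⟩
  simpa using two_mul_card_filter_pos_le_of_tendsto (S := S) hk (fun p => (hu p).neg)
    fun m => by simp [truncate_neg, hsum m]

variable {ι : Type*} [Fintype ι]

theorem exists_mem_sphere_forall_bisects {E : Type*} [NormedAddCommGroup E] [NormedSpace ℝ E]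
    [FiniteDimensional ℝ E] (hdim : Fintype.card ι < finrank ℝ E) (φ : α → Dual ℝ E)
    (S : ι → Finset α) :
    ∃ a ∈ Metric.sphere (0 : E) 1, ∀ i, Bisects (fun p => φ p a) (S i) := by
  have hφ (p : α) : Continuous (φ p) := (φ p).continuous_of_finiteDimensional
  have hzero (k : ℕ) : ∃ y ∈ Metric.sphere (0 : E) 1,
      (fun i => ∑ p ∈ S i, truncate (k * φ p y)) = 0 := by
    refine borsuk_ulam (F := ι → ℝ) (by simpa using hdim) (Continuous.continuousOn ?_) fun y _ => ?_
    · exact continuous_pi fun i => continuous_finsetSum _ fun p _ =>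
        continuous_truncate.comp (continuous_const.mul (hφ p))
    · ext i
      simp [truncate_neg]
  choose y hy hysum using hzero
  have := FiniteDimensional.proper ℝ E
  obtain ⟨a, ha, ψ, hψ, hlim⟩ := (isCompact_sphere (0 : E) 1).tendsto_subseq hy
  exact ⟨a, ha, fun i => bisects_of_tendsto
    (tendsto_natCast_atTop_atTop.comp hψ.tendsto_atTop)
    (fun p => ((hφ p).tendsto a).comp hlim) fun m => congrFun (hysum (ψ m)) i⟩

theorem exists_ne_zero_forall_bisects {V : Type*} [AddCommGroup V] [Module ℝ V]
    [FiniteDimensional ℝ V] (hdim : Fintype.card ι < finrank ℝ V) (φ : α → Dual ℝ V)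
    (S : ι → Finset α) : ∃ a ≠ 0, ∀ i, Bisects (fun p => φ p a) (S i) := by
  let e := (finBasis ℝ V).equivFun
  obtain ⟨a, ha, hbis⟩ := exists_mem_sphere_forall_bisects (E := Fin (finrank ℝ V) → ℝ)
    (by simpa using hdim) (fun p => φ p ∘ₗ e.symm.toLinearMap) S
  exact ⟨e.symm a, e.symm.map_ne_zero_iff.mpr (ne_zero_of_mem_unit_sphere ⟨a, ha⟩), hbis⟩

end HamSandwich

section EasyBezout

variable {σ R M : Type*} [CommRing R] [AddCommGroup M] [Module R M] {n : σ → ℕ}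
  {h : σ → MvPolynomial σ R}

theorem map_eq_zero_of_forall_box_monomial (E : MvPolynomial σ R →ₗ[R] M)
    (hE : ∀ i q, E (X i ^ n i * q) = E (h i * q)) (hdeg : ∀ i, (h i).totalDegree < n i)
    (hbox : ∀ s : σ →₀ ℕ, (∀ i, s i < n i) → E (monomial s 1) = 0) : E = 0 := by
  have hmono (s : σ →₀ ℕ) : E (monomial s 1) = 0 := by
    induction hs : s.degree using Nat.strong_induction_on generalizing s with
    | _ N ih =>
      by_cases hlt : ∀ i, s i < n i
      · exact hbox s hlt
      push Not at hlt
      obtain ⟨i, hi⟩ := hlt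
      have hle : Finsupp.single i (n i) ≤ s := by simpa using hi
      obtain ⟨t, rfl⟩ := le_iff_exists_add.mp hle
      have hreduce : E (monomial (Finsupp.single i (n i) + t) 1) = E (h i * monomial t 1) := by
        rw [← hE, X_pow_eq_monomial, monomial_mul, one_mul]
      rw [hreduce, as_sum (h i * monomial t 1), map_sum]
      refine Finset.sum_eq_zero fun u hu => ?_
      rw [← mul_one (coeff u _), ← smul_eq_mul, ← smul_monomial, map_smul, ih _ ?_ u rfl, smul_zero]
      calc u.degree ≤ (h i * monomial t 1).totalDegree := le_totalDegree hu
        _ ≤ (h i).totalDegree + t.degree :=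
          (totalDegree_mul _ _).trans (by gcongr; exact totalDegree_monomial_le _ _)
        _ < n i + t.degree := by gcongr; exact hdeg i
        _ = N := by rw [← hs, map_add, Finsupp.degree_single]
  exact (basisMonomials σ R).ext fun s => by simpa using hmono s

theorem linearIndependent_eval (σ R : Type*) [CommRing R] [IsDomain R] :
    LinearIndependent R fun (x : σ → R) (p : MvPolynomial σ R) => eval x p := by
  refine (linearIndependent_monoidHom (MvPolynomial σ R) R).comp
    (fun x : σ → R => (eval x : MvPolynomial σ R →* R)) fun x y hxy => ?_
  ext i
  simpa using DFunLike.congr_fun hxy (X i)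

theorem card_le_prod_of_pow_eq_eval [Fintype σ] [IsDomain R] (hdeg : ∀ i, (h i).totalDegree < n i)
    (Z : Finset (σ → R)) (hZ : ∀ z ∈ Z, ∀ i, z i ^ n i = eval z (h i)) :
    Z.card ≤ ∏ i, n i := by
  have hli : LinearIndependent R fun (z : Z) (a : (i : σ) → Fin (n i)) =>
      eval z.1 (monomial (boxExponent a) 1) := by
    rw [Fintype.linearIndependent_iff]
    intro c hc
    let E : MvPolynomial σ R →ₗ[R] R := ∑ z : Z, c z • (aeval z.1).toLinearMap
    have hEapply (p) : E p = ∑ z : Z, c z * eval z.1 p := by simp [E]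
    have hE : E = 0 := by
      refine map_eq_zero_of_forall_box_monomial E (h := h) (fun i q => ?_) hdeg fun s hs => ?_
      · simp only [hEapply, map_mul, map_pow, eval_X, hZ _ (Subtype.coe_prop _)]
      · simpa [hEapply, boxExponent_mk] using congrFun hc fun i => ⟨s i, hs i⟩
    refine Fintype.linearIndependent_iff.mp
      ((linearIndependent_eval σ R).comp _ Subtype.coe_injective) c ?_
    ext p
    simpa [hEapply] using LinearMap.congr_fun hE p
  simpa using hli.fintype_card_le_finrank

end EasyBezout

section LocalMax

theorem exists_isLocalMax_mem_connectedComponentIn {X α : Type*} [TopologicalSpace X]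
    [LocallyConnectedSpace X] [LinearOrder α] [TopologicalSpace α] [ClosedIciTopology α]
    {F : X → α} (hF : Continuous F) {U : Set X} (hU : IsOpen U) {p : X} (hp : p ∈ U)
    (hlt : ∀ x ∉ U, F x < F p) (hinf : ∀ᶠ x in cocompact X, F x ≤ F p) :
    ∃ z ∈ connectedComponentIn U p, IsLocalMax F z := by
  set S := connectedComponentIn U p
  have hpS : p ∈ S := mem_connectedComponentIn hp
  obtain ⟨z, hzS, hmax⟩ := hF.continuousOn.exists_isMaxOn' isClosed_closure (subset_closure hpS)
    (hinf.filter_mono inf_le_left)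
  have hzU : z ∈ U := by
    by_contra hz
    exact (hlt z hz).not_ge (hmax (subset_closure hpS))
  have hconn : IsPreconnected (insert z S) :=
    isPreconnected_connectedComponentIn.subset_closure (Set.subset_insert z S)
      (Set.insert_subset hzS subset_closure)
  have hz : z ∈ S := hconn.subset_connectedComponentIn (Set.mem_insert_of_mem z hpS)
    (Set.insert_subset hzU (connectedComponentIn_subset U p)) (Set.mem_insert z S)
  exact ⟨z, hz, (hmax.on_subset subset_closure).isLocalMax (hU.connectedComponentIn.mem_nhds hz)⟩

end LocalMax

section Components

variable {σ : Type*}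

theorem totalDegree_pderiv_le {R : Type*} [CommSemiring R] (i : σ) (f : MvPolynomial σ R) :
    (pderiv i f).totalDegree ≤ f.totalDegree := by
  conv_lhs => rw [f.as_sum, map_sum]
  refine totalDegree_finsetSum_le fun s hs => ?_
  rw [pderiv_monomial]
  calc (monomial (s - .single i 1) (coeff s f * s i)).totalDegree
      ≤ (s - .single i 1).degree := totalDegree_monomial_le _ _
    _ ≤ s.degree := Finsupp.degree_mono tsub_le_self
    _ ≤ f.totalDegree := le_totalDegree hs

theorem hasDerivAt_eval_update {𝕜 : Type*} [NontriviallyNormedField 𝕜] (f : MvPolynomial σ 𝕜)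
    (z : σ → 𝕜) (i : σ) :
    HasDerivAt (fun t => eval (Function.update z i t) f) (eval z (pderiv i f)) (z i) := by
  induction f using MvPolynomial.induction_on with
  | C a => simpa using hasDerivAt_const (z i) a
  | add p q hp hq =>
    simp only [map_add]
    exact hp.add hq
  | mul_X p j hp =>
    have hX : HasDerivAt (fun t => Function.update z i t j) (eval z (pderiv i (X j))) (z i) := by
      obtain rfl | hij := eq_or_ne j i
      · simpa only [Function.update_self, pderiv_X_self, map_one] using hasDerivAt_id' (z j)
      · simpa [hij, pderiv_X_of_ne hij] using hasDerivAt_const (z i) (z j)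
    have hpX := hp.mul hX
    simp only [Function.update_eq_self] at hpX
    have heval : eval z (pderiv i (p * X j)) =
        eval z (pderiv i p) * z j + eval z p * eval z (pderiv i (X j)) := by
      rw [pderiv_mul, map_add, map_mul, map_mul, eval_X]
    rw [heval]
    simpa only [map_mul, eval_X] using! hpX

variable [Fintype σ]

theorem pow_eq_eval_of_isLocalMax {f : MvPolynomial σ ℝ} {k : ℕ} {ε : ℝ} (hε : ε ≠ 0) {z : σ → ℝ}
    (hz : IsLocalMax (fun x => eval x f ^ 2 - ε * ∑ i, x i ^ (2 * (k + 1))) z) (i : σ) :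
    z i ^ (2 * k + 1) = eval z (C (ε * (k + 1))⁻¹ * f * pderiv i f) := by
  set F : MvPolynomial σ ℝ := f ^ 2 - C ε * ∑ i, X i ^ (2 * (k + 1))
  have hslice : IsLocalMax (fun t => eval (Function.update z i t) F) (z i) := by
    have hcont : Tendsto (Function.update z i) (𝓝 (z i)) (𝓝 z) := by
      have hupdate : Continuous (Function.update z i) := continuous_const.update i continuous_id
      simpa using hupdate.tendsto (z i)
    filter_upwards [hcont.eventually hz] with t ht
    simpa [F] using ht
  have hcrit : eval z (pderiv i F) = 0 := hslice.hasDerivAt_eq_zero (hasDerivAt_eval_update F z i)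
  have hpderiv : eval z (pderiv i F) =
      2 * (eval z f * eval z (pderiv i f) - ε * (k + 1) * z i ^ (2 * k + 1)) := by
    have hexp : 2 * (k + 1) - 1 = 2 * k + 1 := by omega
    simp only [F, map_sub, map_sum, Derivation.leibniz_pow, Derivation.leibniz, derivation_C,
      pderiv_X, Pi.single_apply, nsmul_eq_mul, smul_eq_mul, mul_ite, mul_one, mul_zero,
      Finset.sum_ite_eq', Finset.mem_univ, if_true, add_zero, hexp, Nat.add_one_sub_one, pow_one,
      map_mul, map_pow, map_natCast, eval_C, eval_X]
    push_cast
    ring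
  have hk : (k + 1 : ℝ) ≠ 0 := by positivity
  rw [hpderiv] at hcrit
  simp only [map_mul, eval_C]
  field_simp
  linarith

theorem norm_pow_le_sum_pow (x : σ → ℝ) {n : ℕ} (hn : n ≠ 0) (heven : Even n) :
    ‖x‖ ^ n ≤ ∑ i, x i ^ n := by
  obtain _ | _ := isEmpty_or_nonempty σ
  · simp [hn, Subsingleton.elim x 0]
  obtain ⟨i, hi⟩ := Finite.exists_max fun i => ‖x i‖
  calc ‖x‖ ^ n ≤ ‖x i‖ ^ n := by
        gcongr
        exact (pi_norm_le_iff_of_nonempty x).mpr hi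
    _ = x i ^ n := by rw [Real.norm_eq_abs, heven.pow_abs]
    _ ≤ ∑ i, x i ^ n := Finset.single_le_sum (fun j _ => heven.pow_nonneg (x j)) (Finset.mem_univ i)

theorem eval_isLittleO_cocompact {𝕜 : Type*} [NormedField 𝕜] [ProperSpace 𝕜]
    (f : MvPolynomial σ 𝕜) {n : ℕ} (hn : f.totalDegree < n) :
    (fun x => eval x f) =o[cocompact (σ → 𝕜)] fun x => ‖x‖ ^ n := by
  simp_rw [eval_eq']
  refine .fun_sum fun s hs => .const_mul_left ?_ _
  have hmono : (fun x => ∏ i, x i ^ s i) =O[cocompact (σ → 𝕜)] fun x => ‖x‖ ^ s.degree := by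
    refine .of_norm_le fun x => ?_
    simp only [norm_prod, norm_pow, Finsupp.degree_eq_sum, ← Finset.prod_pow_eq_pow_sum]
    gcongr with i
    exact norm_le_pi_norm x i
  exact hmono.trans_isLittleO <|
    (isLittleO_pow_pow_atTop_of_lt ((le_totalDegree hs).trans_lt hn)).comp_tendsto
      tendsto_norm_cocompact_atTop

theorem exists_isLocalMax_sq_sub_mem_connectedComponentIn {f : MvPolynomial σ ℝ} {k : ℕ}
    (hf : f.totalDegree ≤ k) {ε : ℝ} (hε : 0 < ε) {p : σ → ℝ}
    (hp : ε * ∑ i, p i ^ (2 * (k + 1)) < eval p f ^ 2) :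
    ∃ z ∈ connectedComponentIn {x | eval x f ≠ 0} p,
      IsLocalMax (fun x => eval x f ^ 2 - ε * ∑ i, x i ^ (2 * (k + 1))) z := by
  have hsum (x : σ → ℝ) : 0 ≤ ∑ i, x i ^ (2 * (k + 1)) :=
    Finset.sum_nonneg fun i _ => (even_two_mul _).pow_nonneg (x i)
  have hcont := f.continuous_eval
  refine exists_isLocalMax_mem_connectedComponentIn (by fun_prop)
    (isOpen_ne_fun hcont continuous_const) (fun h0 => ?_) (fun x hx => ?_) ?_
  · rw [h0] at hp
    nlinarith [hsum p]
  · rw [show eval x f = 0 by simpa using hx]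
    nlinarith [hsum x]
  · filter_upwards [(eval_isLittleO_cocompact f (Nat.lt_succ_of_le hf)).bound
      (Real.sqrt_pos.mpr hε)] with x hx
    have hle : eval x f ^ 2 ≤ ε * ∑ i, x i ^ (2 * (k + 1)) :=
      calc eval x f ^ 2 = ‖eval x f‖ ^ 2 := by rw [Real.norm_eq_abs, sq_abs]
        _ ≤ (√ε * ‖‖x‖ ^ (k + 1)‖) ^ 2 := by gcongr
        _ = ε * ‖x‖ ^ (2 * (k + 1)) := by
          rw [norm_pow, norm_norm, mul_pow, Real.sq_sqrt hε.le, ← pow_mul, mul_comm 2]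
        _ ≤ ε * ∑ i, x i ^ (2 * (k + 1)) := by
          gcongr
          exact norm_pow_le_sum_pow x (by omega) (even_two_mul _)
    linarith

theorem card_le_of_injOn_connectedComponentIn (f : MvPolynomial σ ℝ) (Q : Finset (σ → ℝ))
    (hQ : ∀ p ∈ Q, eval p f ≠ 0)
    (hinj : Set.InjOn (connectedComponentIn {x | eval x f ≠ 0}) Q) :
    Q.card ≤ (2 * f.totalDegree + 1) ^ Fintype.card σ := by
  set k := f.totalDegree
  obtain ⟨ε, hsmall, hε⟩ : ∃ ε : ℝ, (∀ p ∈ Q, ε * ∑ i, p i ^ (2 * (k + 1)) < eval p f ^ 2) ∧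
      0 < ε := by
    have hlim (p : σ → ℝ) : Tendsto (fun ε : ℝ => ε * ∑ i, p i ^ (2 * (k + 1))) (𝓝[>] 0) (𝓝 0) :=
      tendsto_nhdsWithin_of_tendsto_nhds (Continuous.tendsto' (by fun_prop) _ _ (by simp))
    have hev : ∀ᶠ ε in 𝓝[>] 0, ∀ p ∈ Q, ε * ∑ i, p i ^ (2 * (k + 1)) < eval p f ^ 2 :=
      (eventually_all_finset Q).mpr fun p hp =>
        (hlim p).eventually_lt_const (by have := hQ p hp; positivity)
    exact (hev.and self_mem_nhdsWithin).exists
  choose! z hz hmax using fun p hp =>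
    exists_isLocalMax_sq_sub_mem_connectedComponentIn le_rfl hε (hsmall p hp)
  have hzinj : Set.InjOn z Q := fun p hp q hq hpq => hinj hp hq <| by
    rw [connectedComponentIn_eq (hz p hp), hpq, ← connectedComponentIn_eq (hz q hq)]
  calc Q.card = (Q.image z).card := (Finset.card_image_of_injOn hzinj).symm
    _ ≤ ∏ _i : σ, (2 * k + 1) := by
      refine card_le_prod_of_pow_eq_eval
        (h := fun i => C (ε * (k + 1))⁻¹ * f * pderiv i f) (fun i => ?_) _ ?_
      · have hC : (C (ε * (k + 1))⁻¹ * f).totalDegree ≤ k := by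
          rw [← smul_eq_C_mul]
          exact totalDegree_smul_le _ f
        have := totalDegree_mul (C (ε * (k + 1))⁻¹ * f) (pderiv i f)
        have := totalDegree_pderiv_le i f
        omega
      · simp only [Finset.forall_mem_image]
        exact fun p hp => pow_eq_eval_of_isLocalMax hε.ne' (hmax p hp)
    _ = (2 * k + 1) ^ Fintype.card σ := by simp

/-- The cells of the partition of space by the polynomial `f`: the connected components of the
complement of its zero set. -/
def cells {σ : Type*} (f : MvPolynomial σ ℝ) : Set (Set (σ → ℝ)) :=
  {U | ∃ x, eval x f ≠ 0 ∧ U = connectedComponentIn {x | eval x f ≠ 0} x}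

theorem encard_cells_le (f : MvPolynomial σ ℝ) :
    (cells f).encard ≤ ((2 * f.totalDegree + 1) ^ Fintype.card σ : ℕ) := by
  have himage : cells f = connectedComponentIn {x | eval x f ≠ 0} '' {x | eval x f ≠ 0} := by
    ext
    simp [cells, eq_comm]
  obtain ⟨V, hV, hbij⟩ :=
    Set.exists_subset_bijOn {x | eval x f ≠ 0} (connectedComponentIn {x | eval x f ≠ 0})
  rw [himage, ← hbij.image_eq, hbij.injOn.encard_image]
  by_contra! hlt
  obtain ⟨Q, hQV, hQ⟩ := Set.exists_subset_encard_eq (Order.add_one_le_of_lt hlt)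
  lift Q to Finset (σ → ℝ) using Set.finite_of_encard_eq_coe (k := _ + 1) (by exact_mod_cast hQ)
  have := card_le_of_injOn_connectedComponentIn f Q (fun p hp => hV (hQV hp)) (hbij.injOn.mono hQV)
  rw [Set.encard_coe_eq_coe_finsetCard] at hQ
  norm_cast at hQ
  omega

end Components

section SignParts

variable {σ : Type*}

/-- The polynomial `f` cuts `P` into subsets of members of the family `𝒮`: every connected set on
which `f` does not vanish meets `P` within one member of `𝒮`. Points of `P` on the zero set of `f`
are unconstrained. -/
def CutsInto (f : MvPolynomial σ ℝ) (P : Finset (σ → ℝ)) (𝒮 : Finset (Finset (σ → ℝ))) : Prop :=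
  ∀ U : Set (σ → ℝ), IsPreconnected U → (∀ x ∈ U, eval x f ≠ 0) →
    ∃ S ∈ 𝒮, (P : Set (σ → ℝ)) ∩ U ⊆ S

/-- The family obtained from `𝒮` by replacing each member by its two parts on which `g` is positive
and negative, respectively. -/
def signParts (g : MvPolynomial σ ℝ) (𝒮 : Finset (Finset (σ → ℝ))) :
    Finset (Finset (σ → ℝ)) :=
  𝒮.biUnion fun S => {{p ∈ S | 0 < eval p g}, {p ∈ S | eval p g < 0}}

theorem card_signParts_le (g : MvPolynomial σ ℝ) (𝒮 : Finset (Finset (σ → ℝ))) :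
    (signParts g 𝒮).card ≤ 𝒮.card * 2 :=
  Finset.card_biUnion_le_card_mul _ _ _ fun _ _ => Finset.card_le_two

theorem exists_two_mul_card_le_of_mem_signParts {g : MvPolynomial σ ℝ}
    {𝒮 : Finset (Finset (σ → ℝ))} (hg : ∀ S ∈ 𝒮, Bisects (eval · g) S) {T : Finset (σ → ℝ)}
    (hT : T ∈ signParts g 𝒮) : ∃ S ∈ 𝒮, 2 * T.card ≤ S.card := by
  obtain ⟨S, hS, hTS⟩ := Finset.mem_biUnion.mp hT
  refine ⟨S, hS, ?_⟩
  obtain rfl | rfl : T = {p ∈ S | 0 < eval p g} ∨ T = {p ∈ S | eval p g < 0} := by simpa using hTS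
  exacts [(hg S hS).1, (hg S hS).2]

theorem forall_eval_pos_or_forall_eval_neg {g : MvPolynomial σ ℝ} {U : Set (σ → ℝ)}
    (hU : IsPreconnected U) (hg : ∀ x ∈ U, eval x g ≠ 0) :
    (∀ x ∈ U, 0 < eval x g) ∨ ∀ x ∈ U, eval x g < 0 := by
  by_contra! h
  obtain ⟨⟨x, hx, hx0⟩, y, hy, hy0⟩ := h
  obtain ⟨z, hz, hz0⟩ := hU.intermediate_value hx hy g.continuous_eval.continuousOn ⟨hx0, hy0⟩
  exact hg z hz hz0

theorem CutsInto.mul {f : MvPolynomial σ ℝ} {P : Finset (σ → ℝ)} {𝒮 : Finset (Finset (σ → ℝ))}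
    (hf : CutsInto f P 𝒮) (g : MvPolynomial σ ℝ) : CutsInto (f * g) P (signParts g 𝒮) := by
  intro U hU hfg
  simp only [map_mul, mul_ne_zero_iff] at hfg
  obtain ⟨S, hS, hsub⟩ := hf U hU fun x hx => (hfg x hx).1
  obtain hpos | hneg := forall_eval_pos_or_forall_eval_neg hU fun x hx => (hfg x hx).2
  · refine ⟨{p ∈ S | 0 < eval p g}, Finset.mem_biUnion.mpr ⟨S, hS, by simp⟩, fun p hp => ?_⟩
    simpa using ⟨hsub hp, hpos p hp.2⟩
  · refine ⟨{p ∈ S | eval p g < 0}, Finset.mem_biUnion.mpr ⟨S, hS, by simp⟩, fun p hp => ?_⟩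
    simpa using ⟨hsub hp, hneg p hp.2⟩

theorem CutsInto.exists_ncard_inter_le {f : MvPolynomial σ ℝ} {P : Finset (σ → ℝ)}
    {𝒮 : Finset (Finset (σ → ℝ))} (hf : CutsInto f P 𝒮) {U : Set (σ → ℝ)} (hU : U ∈ cells f) :
    ∃ S ∈ 𝒮, ((P : Set (σ → ℝ)) ∩ U).ncard ≤ S.card := by
  obtain ⟨x, -, rfl⟩ := hU
  obtain ⟨S, hS, hsub⟩ :=
    hf _ isPreconnected_connectedComponentIn fun y hy => connectedComponentIn_subset _ x hy
  exact ⟨S, hS, (Set.ncard_le_ncard hsub S.finite_toSet).trans_eq (Set.ncard_coe_finset S)⟩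

end SignParts

section Partitioning

variable {σ : Type*}

theorem exists_mem_restrictSupport_forall_bisects {ι : Type*} [Fintype ι] {s : Set (σ →₀ ℕ)}
    [Finite s] (hs : Fintype.card ι < Nat.card s) (S : ι → Finset (σ → ℝ)) :
    ∃ g ∈ restrictSupport ℝ s, g ≠ 0 ∧ ∀ i, Bisects (eval · g) (S i) := by
  have := Fintype.ofFinite s
  have := (basisRestrictSupport ℝ s).finiteDimensional_of_finite
  obtain ⟨g, hg, hbis⟩ := exists_ne_zero_forall_bisects
    (V := restrictSupport ℝ s)
    (by rwa [finrank_eq_nat_card_basis (basisRestrictSupport ℝ s)])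
    (fun p : σ → ℝ => (aeval p).toLinearMap ∘ₗ (restrictSupport ℝ s).subtype) S
  refine ⟨g, g.2, Subtype.coe_ne_coe.mpr hg, fun i => ?_⟩
  simpa [aeval_eq_eval] using hbis i

variable [Fintype σ]

theorem totalDegree_le_of_mem_restrictSupport_range_boxExponent {R : Type*} [CommSemiring R]
    {k : ℕ} {g : MvPolynomial σ R}
    (hg : g ∈ restrictSupport R (Set.range (boxExponent (n := fun _ : σ => k + 1)))) :
    g.totalDegree ≤ Fintype.card σ * k := by
  refine Finset.sup_le fun m hm => ?_
  obtain ⟨a, rfl⟩ := (mem_restrictSupport_iff R).mp hg hm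
  rw [Finsupp.sum_fintype _ _ fun _ => rfl]
  exact (Finset.sum_le_card_nsmul _ _ k fun i _ => Nat.lt_succ_iff.mp (a i).2).trans_eq (by simp)

theorem exists_totalDegree_le_forall_bisects [Nonempty σ] {ι : Type*} [Fintype ι]
    (S : ι → Finset (σ → ℝ)) :
    ∃ g : MvPolynomial σ ℝ, g ≠ 0 ∧
      (g.totalDegree : ℝ) ≤
        Fintype.card σ * (Fintype.card ι : ℝ) ^ (1 / (Fintype.card σ : ℝ)) ∧
      ∀ i, Bisects (eval · g) (S i) := by
  set ρ : ℝ := (Fintype.card ι : ℝ) ^ (1 / (Fintype.card σ : ℝ)) with hρ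
  have hlt : Fintype.card ι < (⌊ρ⌋₊ + 1) ^ Fintype.card σ := by
    have h : (Fintype.card ι : ℝ) < (⌊ρ⌋₊ + 1) ^ Fintype.card σ :=
      calc (Fintype.card ι : ℝ) = ρ ^ Fintype.card σ := by
            rw [hρ, one_div, Real.rpow_inv_natCast_pow (Nat.cast_nonneg _) Fintype.card_ne_zero]
        _ < _ := pow_lt_pow_left₀ (Nat.lt_floor_add_one ρ) (by positivity) Fintype.card_ne_zero
    exact_mod_cast h
  obtain ⟨g, hg, hg0, hbis⟩ := exists_mem_restrictSupport_forall_bisects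
    (s := Set.range (boxExponent (n := fun _ : σ => ⌊ρ⌋₊ + 1)))
    (by rw [Nat.card_range_of_injective boxExponent_injective]; simpa using hlt) S
  refine ⟨g, hg0, ?_, hbis⟩
  calc (g.totalDegree : ℝ) ≤ Fintype.card σ * ⌊ρ⌋₊ := by
        exact_mod_cast totalDegree_le_of_mem_restrictSupport_range_boxExponent hg
    _ ≤ Fintype.card σ * ρ := by gcongr; exact Nat.floor_le (by positivity)

theorem exists_cutsInto [Nonempty σ] (P : Finset (σ → ℝ)) (j : ℕ) :
    ∃ f : MvPolynomial σ ℝ, f ≠ 0 ∧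
      (f.totalDegree : ℝ) ≤
        Fintype.card σ * ∑ i ∈ Finset.range j, ((2 : ℝ) ^ (1 / (Fintype.card σ : ℝ))) ^ i ∧
      ∃ 𝒮, 𝒮.card ≤ 2 ^ j ∧ (∀ S ∈ 𝒮, 2 ^ j * S.card ≤ P.card) ∧ CutsInto f P 𝒮 := by
  induction j with
  | zero =>
    exact ⟨1, one_ne_zero, by simp, {P}, by simp, by simp,
      fun U _ _ => ⟨P, by simp, Set.inter_subset_left⟩⟩
  | succ j ih =>
    obtain ⟨f, hf0, hfdeg, 𝒮, hcard, hS, hcut⟩ := ih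
    obtain ⟨g, hg0, hgdeg, hbis⟩ := exists_totalDegree_le_forall_bisects (fun S : 𝒮 => S.1)
    refine ⟨f * g, mul_ne_zero hf0 hg0, ?_, signParts g 𝒮, ?_, fun T hT => ?_, hcut.mul g⟩
    · have hroot : (Fintype.card 𝒮 : ℝ) ^ (1 / (Fintype.card σ : ℝ)) ≤
          ((2 : ℝ) ^ (1 / (Fintype.card σ : ℝ))) ^ j := by
        rw [Real.rpow_pow_comm zero_le_two, Fintype.card_coe]
        gcongr
        exact_mod_cast hcard
      calc ((f * g).totalDegree : ℝ) ≤ f.totalDegree + g.totalDegree := by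
            exact_mod_cast totalDegree_mul f g
        _ ≤ _ := by
          rw [Finset.sum_range_succ, mul_add]
          exact add_le_add hfdeg (hgdeg.trans (by gcongr))
    · exact (card_signParts_le g 𝒮).trans (Nat.mul_le_mul_right 2 hcard)
    · obtain ⟨S, hmem, hTS⟩ :=
        exists_two_mul_card_le_of_mem_signParts (fun S hS => hbis ⟨S, hS⟩) hT
      calc 2 ^ (j + 1) * T.card = 2 ^ j * (2 * T.card) := by ring
        _ ≤ 2 ^ j * S.card := Nat.mul_le_mul_left _ hTS
        _ ≤ P.card := hS S hmem

theorem geom_sum_succ_le {b : ℝ} (hb : 1 < b) (n : ℕ) :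
    ∑ i ∈ Finset.range (n + 1), b ^ i ≤ b / (b - 1) * b ^ n := by
  have : 0 ≤ b - 1 := (sub_pos.mpr hb).le
  rw [geom_sum_eq hb.ne', div_mul_eq_mul_div, ← pow_succ']
  gcongr
  exact sub_le_self _ zero_le_one

variable (σ) in
theorem exists_forall_ncard_inter_cells_le [Nonempty σ] :
    ∃ c : ℝ, 0 < c ∧ ∀ (P : Finset (σ → ℝ)) (r : ℝ), 1 ≤ r →
      ∃ f : MvPolynomial σ ℝ, f ≠ 0 ∧
        (f.totalDegree : ℝ) ≤ c * r ^ (1 / (Fintype.card σ : ℝ)) ∧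
        ∀ U ∈ cells f, (((P : Set (σ → ℝ)) ∩ U).ncard : ℝ) ≤ P.card / r := by
  set b : ℝ := (2 : ℝ) ^ (1 / (Fintype.card σ : ℝ)) with hb
  have hb1 : 1 < b := Real.one_lt_rpow one_lt_two (by positivity)
  have : 0 < b - 1 := sub_pos.mpr hb1
  refine ⟨Fintype.card σ * (b / (b - 1)), by positivity, fun P r hr => ?_⟩
  have hr0 : 0 < r := one_pos.trans_le hr
  obtain ⟨n, hnr, hrn⟩ := exists_nat_pow_near hr one_lt_two
  obtain ⟨f, hf0, hdeg, 𝒮, -, hS, hcut⟩ := exists_cutsInto P (n + 1)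
  refine ⟨f, hf0, ?_, fun U hU => ?_⟩
  · calc (f.totalDegree : ℝ) ≤ Fintype.card σ * ∑ i ∈ Finset.range (n + 1), b ^ i := hdeg
      _ ≤ Fintype.card σ * (b / (b - 1) * b ^ n) := by gcongr; exact geom_sum_succ_le hb1 n
      _ ≤ Fintype.card σ * (b / (b - 1) * r ^ (1 / (Fintype.card σ : ℝ))) := by
        rw [hb, Real.rpow_pow_comm zero_le_two]
        gcongr
      _ = _ := (mul_assoc _ _ _).symm
  · obtain ⟨S, hmem, hUS⟩ := hcut.exists_ncard_inter_le hU
    rw [le_div_iff₀' hr0]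
    calc r * ((P : Set (σ → ℝ)) ∩ U).ncard ≤ 2 ^ (n + 1) * S.card := by gcongr
      _ ≤ P.card := by exact_mod_cast hS S hmem

variable (σ) in
theorem polynomial_partitioning_general [Nonempty σ] :
    ∃ c : ℝ, 0 < c ∧ ∀ (P : Finset (σ → ℝ)) (r : ℝ), 1 ≤ r →
      ∃ f : MvPolynomial σ ℝ, f ≠ 0 ∧
        (f.totalDegree : ℝ) ≤ c * r ^ (1 / (Fintype.card σ : ℝ)) ∧
        (∀ U ∈ cells f, (((P : Set (σ → ℝ)) ∩ U).ncard : ℝ) ≤ P.card / r) ∧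
        (cells f).Finite ∧ ((cells f).ncard : ℝ) ≤ c * r := by
  set d := Fintype.card σ
  obtain ⟨c, hc, hpart⟩ := exists_forall_ncard_inter_cells_le σ
  refine ⟨c + (2 * c + 1) ^ d, by positivity, fun P r hr => ?_⟩
  obtain ⟨f, hf0, hdeg, hcell⟩ := hpart P r hr
  obtain ⟨hfin, hcard⟩ := Set.encard_le_coe_iff_finite_ncard_le.mp (encard_cells_le f)
  have hr0 : 0 < r := one_pos.trans_le hr
  have hρ1 : 1 ≤ r ^ (1 / (d : ℝ)) := Real.one_le_rpow hr (by positivity)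
  refine ⟨f, hf0, hdeg.trans ?_, hcell, hfin, ?_⟩
  · gcongr
    exact le_add_of_nonneg_right (by positivity)
  · calc ((cells f).ncard : ℝ) ≤ (2 * f.totalDegree + 1) ^ d := by exact_mod_cast hcard
      _ ≤ ((2 * c + 1) * r ^ (1 / (d : ℝ))) ^ d := by gcongr; linarith
      _ = (2 * c + 1) ^ d * r := by
        rw [mul_pow, one_div, Real.rpow_inv_natCast_pow hr0.le Fintype.card_ne_zero]
      _ ≤ (c + (2 * c + 1) ^ d) * r := by gcongr; exact le_add_of_nonneg_left hc.le

end Partitioning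

/-- **Polynomial partitioning (Guth–Katz).** For every `d ≥ 2` there is a constant
`c_d` such that for every finite set `P` of `m` points in `ℝ^d` and every real
`1 ≤ r ≤ m` there is a nonzero polynomial `f` of degree at most `c_d r^{1/d}` such
that every connected component of `ℝ^d ∖ Z(f)` contains at most `m/r` points of
`P`; moreover, the number of connected components of `ℝ^d ∖ Z(f)` is at most
`c_d r`. -/
theorem polynomial_partitioning (d : ℕ) (hd : 2 ≤ d) :
    ∃ c : ℝ, 0 < c ∧
      ∀ (P : Finset (Fin d → ℝ)) (r : ℝ), 1 ≤ r → r ≤ P.card →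
        ∃ f : MvPolynomial (Fin d) ℝ, f ≠ 0 ∧
          (f.totalDegree : ℝ) ≤ c * r ^ (1 / (d : ℝ)) ∧
          (∀ x : Fin d → ℝ, x ∉ zeroSet f →
            (((P : Set (Fin d → ℝ)) ∩ connectedComponentIn (zeroSet f)ᶜ x).ncard : ℝ)
              ≤ (P.card : ℝ) / r) ∧
          {S : Set (Fin d → ℝ) | ∃ x, x ∉ zeroSet f ∧
              S = connectedComponentIn (zeroSet f)ᶜ x}.Finite ∧
          (({S : Set (Fin d → ℝ) | ∃ x, x ∉ zeroSet f ∧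
              S = connectedComponentIn (zeroSet f)ᶜ x}.ncard : ℝ) ≤ c * r) := by
  have : Nonempty (Fin d) := ⟨⟨0, by omega⟩⟩
  obtain ⟨c, hc, h⟩ := polynomial_partitioning_general (Fin d)
  refine ⟨c, hc, fun P r hr _ => ?_⟩
  obtain ⟨f, hf0, hdeg, hcell, hfin, hcard⟩ := h P r hr
  rw [Fintype.card_fin] at hdeg
  exact ⟨f, hf0, hdeg, fun x hx => hcell _ ⟨x, hx, rfl⟩, hfin, hcard⟩
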